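/- Let G be an LWF chain graph with vertex set V and let T ∈ V. Then T is c-separated from V∖({T}∪Mb(T)) given Mb(T); that is, every route in G between T and any vertex A ∈ V∖({T}∪Mb(T)) is intercepted by Mb(T). -/

import Mathlib

/- Formalization of LWF chain graphs, routes, sections, c-separation,
   minimal complexes, Markov blankets, moral graphs, and ancestral sets. -/

namespace LWF

/-- An LWF chain graph: a mixed graph with directed edges `dir` and (symmetric)
undirected edges `undir`, no loops, no pair of vertices joined by more than one
edge, and no partially directed cycles. -/
structure ChainGraph (V : Type*) where
  dir : V → V → Prop
  undir : V → V → Prop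
  undir_symm : ∀ u v, undir u v → undir v u
  dir_irrefl : ∀ v, ¬ dir v v
  undir_irrefl : ∀ v, ¬ undir v v
  dir_asymm : ∀ u v, dir u v → ¬ dir v u
  dir_not_undir : ∀ u v, dir u v → ¬ undir u v
  /-- No partially directed cycle: there is no sequence `ρ 0, …, ρ n` (`n ≥ 2`)
  with `ρ n = ρ 0`, the vertices `ρ 0, …, ρ (n-1)` distinct, every consecutive
  pair joined by `dir` or `undir` (in the forward direction), and at least one
  forward directed edge on it. -/
  no_partially_directed_cycle :
    ∀ (n : ℕ) (ρ : ℕ → V), 2 ≤ n → ρ n = ρ 0 →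
      (∀ i j, i < j → j < n → ρ i ≠ ρ j) →
      (∀ i, i < n → dir (ρ i) (ρ (i+1)) ∨ undir (ρ i) (ρ (i+1))) →
      ¬ ∃ i, i < n ∧ dir (ρ i) (ρ (i+1))

namespace ChainGraph

variable {V : Type*}

/-- Two vertices are adjacent if they are joined by a directed or an undirected edge. -/
def Adj (G : ChainGraph V) (u v : V) : Prop := G.dir u v ∨ G.dir v u ∨ G.undir u v

/-- A partially directed path from `u` to `w`: a sequence of distinct vertices,
each consecutive pair joined by a forward directed or an undirected edge, with
at least one directed edge on it. -/
def PDPath (G : ChainGraph V) (u w : V) : Prop :=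
  ∃ (n : ℕ) (ρ : ℕ → V), 1 ≤ n ∧ ρ 0 = u ∧ ρ n = w ∧
    (∀ i j, i ≤ n → j ≤ n → i ≠ j → ρ i ≠ ρ j) ∧
    (∀ i, i < n → G.dir (ρ i) (ρ (i+1)) ∨ G.undir (ρ i) (ρ (i+1))) ∧
    (∃ i, i < n ∧ G.dir (ρ i) (ρ (i+1)))

/-- `an(Z)`: the set of vertices having a partially directed path to some vertex of `Z`. -/
def anc (G : ChainGraph V) (Z : Set V) : Set V := {x | ∃ z ∈ Z, G.PDPath x z}

/-- Parents of `v`. -/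
def pa (G : ChainGraph V) (v : V) : Set V := {u | G.dir u v}

/-- Children of `v`. -/
def ch (G : ChainGraph V) (v : V) : Set V := {u | G.dir v u}

/-- Neighbours of `v`. -/
def nb (G : ChainGraph V) (v : V) : Set V := {u | G.undir u v}

/-- A minimal complex `a → ρ 1 − ⋯ − ρ n ← b` (with `ρ 0 = a`, `ρ (n+1) = b`,
`n ≥ 1`): all vertices distinct, the indicated edges present, and it is an
induced subgraph, i.e. the only adjacencies among its vertices are between
consecutive ones (in particular `a` and `b` are non-adjacent). -/
def IsMinimalComplex (G : ChainGraph V) (a b : V) (n : ℕ) (ρ : ℕ → V) : Prop :=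
  1 ≤ n ∧ ρ 0 = a ∧ ρ (n+1) = b ∧
  (∀ i j, i ≤ n+1 → j ≤ n+1 → i ≠ j → ρ i ≠ ρ j) ∧
  G.dir a (ρ 1) ∧ G.dir b (ρ n) ∧
  (∀ i, 1 ≤ i → i < n → G.undir (ρ i) (ρ (i+1))) ∧
  (∀ i j, i ≤ n+1 → j ≤ n+1 → G.Adj (ρ i) (ρ j) → j = i+1 ∨ i = j+1)

/-- Complex-spouses of `a`. -/
def csp (G : ChainGraph V) (a : V) : Set V := {b | ∃ n ρ, G.IsMinimalComplex a b n ρ}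

/-- The Markov blanket of `T`: parents, neighbours, children and complex-spouses of `T`. -/
def mb (G : ChainGraph V) (T : V) : Set V := G.pa T ∪ G.nb T ∪ G.ch T ∪ G.csp T

/-- A route in `G`: a sequence of `len + 1` vertices `vtx 0, …, vtx len`
(hence nonempty), each consecutive pair joined by an edge of `G`. -/
structure Route (G : ChainGraph V) where
  len : ℕ
  vtx : ℕ → V
  link : ∀ i, i < len → G.Adj (vtx i) (vtx (i+1))

/-- The positions `a, …, b` of the route form a section: all steps inside are
undirected edges, and the run is maximal on both sides. -/
def Route.IsSection {G : ChainGraph V} (ω : Route G) (a b : ℕ) : Prop :=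
  a ≤ b ∧ b ≤ ω.len ∧
  (∀ k, a ≤ k → k < b → G.undir (ω.vtx k) (ω.vtx (k+1))) ∧
  (0 < a → ¬ G.undir (ω.vtx (a-1)) (ω.vtx a)) ∧
  (b < ω.len → ¬ G.undir (ω.vtx b) (ω.vtx (b+1)))

/-- A collider section: a section which the route enters by an arrowhead at both
ends, i.e. `vtx (a-1) → vtx a − ⋯ − vtx b ← vtx (b+1)` occurs on the route. -/
def Route.IsColliderSection {G : ChainGraph V} (ω : Route G) (a b : ℕ) : Prop :=
  ω.IsSection a b ∧ 0 < a ∧ b < ω.len ∧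
  G.dir (ω.vtx (a-1)) (ω.vtx a) ∧ G.dir (ω.vtx (b+1)) (ω.vtx b)

/-- A route is active with respect to `Z` if every collider section of it
contains a vertex of `Z ∪ an(Z)` and no vertex of any non-collider section is in `Z`. -/
def Route.Active {G : ChainGraph V} (ω : Route G) (Z : Set V) : Prop :=
  (∀ a b, ω.IsColliderSection a b → ∃ k, a ≤ k ∧ k ≤ b ∧ ω.vtx k ∈ Z ∪ G.anc Z) ∧
  (∀ a b, ω.IsSection a b → ¬ ω.IsColliderSection a b →
    ∀ k, a ≤ k → k ≤ b → ω.vtx k ∉ Z)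

/-- A route is intercepted (blocked) by `Z` if it is not active with respect to `Z`. -/
def Route.Intercepted {G : ChainGraph V} (ω : Route G) (Z : Set V) : Prop :=
  ¬ ω.Active Z

/-- `X` and `Y` are c-separated given `Z`: every route between a vertex of `X`
and a vertex of `Y` is intercepted by `Z`. -/
def CSep (G : ChainGraph V) (X Y Z : Set V) : Prop :=
  ∀ ω : Route G,
    ((ω.vtx 0 ∈ X ∧ ω.vtx ω.len ∈ Y) ∨ (ω.vtx 0 ∈ Y ∧ ω.vtx ω.len ∈ X)) →
    ω.Intercepted Z

/-- Moral graph adjacency: distinct `u`, `v` are adjacent in `G^m` iff they are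
adjacent in `G` or are complex-spouses. -/
def MoralAdj (G : ChainGraph V) (u v : V) : Prop :=
  u ≠ v ∧ (G.dir u v ∨ G.dir v u ∨ G.undir u v ∨ u ∈ G.csp v ∨ v ∈ G.csp u)

/-- A set `A` is ancestral if it contains the boundary (parents and neighbours)
of each of its elements. -/
def Ancestral (G : ChainGraph V) (A : Set V) : Prop :=
  ∀ a ∈ A, ∀ u, (G.dir u a ∨ G.undir u a) → u ∈ A

/-- `An(A)`: the smallest ancestral set containing `A`. -/
def An (G : ChainGraph V) (A : Set V) : Set V :=
  ⋂₀ {B : Set V | A ⊆ B ∧ G.Ancestral B}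

/-- A minimal complex of the induced subgraph `G_A`: a minimal complex of `G`
all of whose vertices lie in `A`. -/
def IsMinimalComplexIn (G : ChainGraph V) (A : Set V) (a b : V) (n : ℕ) (ρ : ℕ → V) : Prop :=
  G.IsMinimalComplex a b n ρ ∧ ∀ i, i ≤ n+1 → ρ i ∈ A

/-- Adjacency in the moral graph `(G_A)^m` of the induced subgraph of `G` on `A`:
distinct `u, v ∈ A` joined by an edge of `G`, or complex-spouses in `G_A`. -/
def MoralAdjIn (G : ChainGraph V) (A : Set V) (u v : V) : Prop :=
  u ∈ A ∧ v ∈ A ∧ u ≠ v ∧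
    (G.dir u v ∨ G.dir v u ∨ G.undir u v ∨
      (∃ n ρ, G.IsMinimalComplexIn A u v n ρ) ∨ (∃ n ρ, G.IsMinimalComplexIn A v u n ρ))

end ChainGraph

/-- A path from `u` to `v` in an undirected graph with adjacency relation `R`:
a sequence of `n + 1 ≥ 2` distinct vertices `ρ 0 = u, …, ρ n = v` with each
consecutive pair adjacent. -/
def UPath {V : Type*} (R : V → V → Prop) (u v : V) (n : ℕ) (ρ : ℕ → V) : Prop :=
  1 ≤ n ∧ ρ 0 = u ∧ ρ n = v ∧
  (∀ i j, i ≤ n → j ≤ n → i ≠ j → ρ i ≠ ρ j) ∧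
  (∀ i, i < n → R (ρ i) (ρ (i+1)))

end LWF

namespace LWF

namespace ChainGraph

variable {V : Type*}

/-- One forward step. -/
def Fw (G : ChainGraph V) (u v : V) : Prop := G.dir u v ∨ G.undir u v

lemma exists_walk {R : V → V → Prop} {u v : V} (h : Relation.ReflTransGen R u v) :
    ∃ (n : ℕ) (ρ : ℕ → V), ρ 0 = u ∧ ρ n = v ∧ ∀ i, i < n → R (ρ i) (ρ (i+1)) := by
  induction h with
  | refl => exact ⟨0, fun _ => u, rfl, rfl, by simp⟩
  | @tail b c _ hbc ih =>
    obtain ⟨n, ρ, h0, hn, hs⟩ := ih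
    refine ⟨n+1, fun k => if k ≤ n then ρ k else c, by simp [h0], by simp, ?_⟩
    intro i hi
    rcases Nat.lt_or_ge i n with h | h
    · have := hs i h
      simpa [h.le, Nat.succ_le_of_lt h] using this
    · have : i = n := by omega
      subst this
      simpa [hn] using hbc

lemma acyclic (G : ChainGraph V) {u v : V} (huv : G.dir u v)
    (h : Relation.ReflTransGen G.Fw v u) : False := by
  classical
  have hex : ∃ n, ∃ ρ : ℕ → V, ρ 0 = v ∧ ρ n = u ∧ ∀ i, i < n → G.Fw (ρ i) (ρ (i+1)) :=
    exists_walk h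
  obtain ⟨ρ, h0, hn, hs⟩ := Nat.find_spec hex
  have hmin := fun m => @Nat.find_min _ _ hex m
  generalize Nat.find hex = n at *
  have hinj : ∀ i j, i < j → j ≤ n → ρ i ≠ ρ j := by
    intro i j hij hj he
    refine hmin (n - (j - i)) (by omega)
      ⟨fun k => if k ≤ i then ρ k else ρ (k + (j - i)), by simp [h0], ?_, ?_⟩
    · dsimp only
      split_ifs with hk
      · have h1 : j = n := by omega
        have h2 : n - (j - i) = i := by omega
        rw [h2, he, h1, hn]
      · have h2 : n - (j - i) + (j - i) = n := by omega
        rw [h2, hn]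
    · intro k hk
      dsimp only
      rcases Nat.lt_trichotomy k i with hki | hki | hki
      · rw [if_pos (by omega), if_pos (by omega)]
        exact hs k (by omega)
      · subst hki
        rw [if_pos (by omega), if_neg (by omega), he]
        have : k + 1 + (j - k) = j + 1 := by omega
        rw [this]
        exact hs j (by omega)
      · rw [if_neg (by omega), if_neg (by omega)]
        have : k + 1 + (j - i) = k + (j - i) + 1 := by omega
        rw [this]
        exact hs _ (by omega)
  have hn0 : n ≠ 0 := by
    rintro rfl
    rw [h0] at hn
    subst hn
    exact G.dir_irrefl _ huv
  refine G.no_partially_directed_cycle (n+1) (fun k => if k = 0 then u else ρ (k-1))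
    (by omega) (by simp [hn]) ?_ ?_ ⟨0, by omega, by simpa [h0] using huv⟩
  · intro i j hij hj
    rw [if_neg (show j ≠ 0 by omega)]
    split_ifs with hi
    · rw [← hn]
      exact (hinj _ _ (by omega) le_rfl).symm
    · exact hinj _ _ (by omega) (by omega)
  · intro i hi
    rcases Nat.eq_zero_or_pos i with rfl | hi0
    · left
      simpa [h0] using huv
    · obtain ⟨k, rfl⟩ : ∃ k, i = k + 1 := ⟨i-1, by omega⟩
      simpa [Fw] using hs k (by omega)

lemma fw_right {G : ChainGraph V} {n : ℕ} {ρ : ℕ → V}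
    (hs : ∀ i, i < n → G.undir (ρ i) (ρ (i+1))) (i : ℕ) :
    ∀ d, i + d ≤ n → Relation.ReflTransGen G.Fw (ρ i) (ρ (i+d)) ∧
      Relation.ReflTransGen G.Fw (ρ (i+d)) (ρ i) := by
  intro d
  induction d with
  | zero => intro _; exact ⟨.refl, .refl⟩
  | succ d ih =>
    intro h
    obtain ⟨h1, h2⟩ := ih (by omega)
    have := hs (i+d) (by omega)
    exact ⟨h1.tail (Or.inr this), .head (Or.inr (G.undir_symm _ _ this)) h2⟩

lemma fw_any {G : ChainGraph V} {n : ℕ} {ρ : ℕ → V}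
    (hs : ∀ i, i < n → G.undir (ρ i) (ρ (i+1))) (i j : ℕ) (hi : i ≤ n) (hj : j ≤ n) :
    Relation.ReflTransGen G.Fw (ρ i) (ρ j) := by
  rcases Nat.le_total i j with h | h
  · have := (fw_right hs i (j-i) (by omega)).1
    rwa [Nat.add_sub_cancel' h] at this
  · have := (fw_right hs j (i-j) (by omega)).2
    rwa [Nat.add_sub_cancel' h] at this

lemma Adj.symm' {G : ChainGraph V} {u v : V} (h : G.Adj u v) : G.Adj v u := by
  rcases h with h | h | h
  · exact Or.inr (Or.inl h)
  · exact Or.inl h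
  · exact Or.inr (Or.inr (G.undir_symm _ _ h))

lemma adj_irrefl (G : ChainGraph V) (u : V) : ¬ G.Adj u u := by
  rintro (h | h | h)
  · exact G.dir_irrefl _ h
  · exact G.dir_irrefl _ h
  · exact G.undir_irrefl _ h

/-- Vertices sharing a child component are equal, adjacent or complex-spouses. -/
lemma csp_of_section (G : ChainGraph V) (T e : V) (hne : T ≠ e) (hna : ¬ G.Adj T e)
    (hex : ∃ n, ∃ ρ : ℕ → V, G.dir T (ρ 0) ∧
      (∀ i, i < n → G.undir (ρ i) (ρ (i+1))) ∧ G.dir e (ρ n)) : e ∈ G.csp T := by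
  classical
  obtain ⟨ρ, h0, hs, hn⟩ := Nat.find_spec hex
  have hmin := fun m => @Nat.find_min _ _ hex m
  generalize Nat.find hex = n at *
  have hfw := fun i j => fw_any hs i j
  -- pairwise distinct
  have hinj : ∀ i j, i < j → j ≤ n → ρ i ≠ ρ j := by
    intro i j hij hj he
    refine hmin (n - (j - i)) (by omega)
      ⟨fun k => if k ≤ i then ρ k else ρ (k + (j - i)), by simpa using h0, ?_, ?_⟩
    · intro k hk
      dsimp only
      rcases Nat.lt_trichotomy k i with hki | hki | hki
      · rw [if_pos (by omega), if_pos (by omega)]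
        exact hs k (by omega)
      · subst hki
        rw [if_pos (by omega), if_neg (by omega), he]
        have : k + 1 + (j - k) = j + 1 := by omega
        rw [this]
        exact hs j (by omega)
      · rw [if_neg (by omega), if_neg (by omega)]
        have : k + 1 + (j - i) = k + (j - i) + 1 := by omega
        rw [this]
        exact hs _ (by omega)
    · dsimp only
      split_ifs with hk
      · have h1 : j = n := by omega
        have h2 : n - (j - i) = i := by omega
        rw [h2, he, h1]
        exact hn
      · have h2 : n - (j - i) + (j - i) = n := by omega
        rw [h2]
        exact hn
  -- no chords
  have hch : ∀ i j, i < j → j ≤ n → G.Adj (ρ i) (ρ j) → j = i + 1 := by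
    intro i j hij hj ha
    by_contra hc
    rcases ha with ha | ha | ha
    · exact G.acyclic ha (hfw j i hj (by omega))
    · exact G.acyclic ha (hfw i j (by omega) hj)
    refine hmin (n - (j - i - 1)) (by omega)
      ⟨fun k => if k ≤ i then ρ k else ρ (k + (j - i - 1)), by simpa using h0, ?_, ?_⟩
    · intro k hk
      dsimp only
      rcases Nat.lt_trichotomy k i with hki | hki | hki
      · rw [if_pos (by omega), if_pos (by omega)]
        exact hs k (by omega)
      · subst hki
        rw [if_pos (by omega), if_neg (by omega)]
        have : k + 1 + (j - k - 1) = j := by omega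
        rw [this]
        exact ha
      · rw [if_neg (by omega), if_neg (by omega)]
        have : k + 1 + (j - i - 1) = k + (j - i - 1) + 1 := by omega
        rw [this]
        exact hs _ (by omega)
    · dsimp only
      rw [if_neg (by omega)]
      have h2 : n - (j - i - 1) + (j - i - 1) = n := by omega
      rw [h2]
      exact hn
  have hT : ∀ i, i ≤ n → T ≠ ρ i ∧ (G.Adj T (ρ i) → i = 0) := by
    intro i hi
    refine ⟨fun he => G.acyclic h0 (he ▸ hfw 0 i (by omega) hi), ?_⟩
    rintro (ha | ha | ha)
    · by_contra hc
      refine hmin (n - i) (by omega) ⟨fun k => ρ (k + i), by simpa using ha, ?_, ?_⟩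
      · intro k hk
        have : k + 1 + i = k + i + 1 := by omega
        dsimp only
        rw [this]
        exact hs _ (by omega)
      · dsimp only
        rwa [Nat.sub_add_cancel hi]
    · exact (G.acyclic h0 ((hfw 0 i (by omega) hi).tail (Or.inl ha))).elim
    · exact (G.acyclic h0 ((hfw 0 i (by omega) hi).tail (Or.inr (G.undir_symm _ _ ha)))).elim
  have hE : ∀ i, i ≤ n → ρ i ≠ e ∧ (G.Adj (ρ i) e → i = n) := by
    intro i hi
    refine ⟨fun he => G.acyclic hn (he ▸ hfw n i le_rfl hi), ?_⟩
    rintro (ha | ha | ha)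
    · exact (G.acyclic hn ((hfw n i le_rfl hi).tail (Or.inl ha))).elim
    · by_contra hc
      exact hmin i (by omega) ⟨ρ, h0, fun k hk => hs k (by omega), ha⟩
    · exact (G.acyclic hn ((hfw n i le_rfl hi).tail (Or.inr ha))).elim
  let σ : ℕ → V := fun k => if k = 0 then T else if k ≤ n + 1 then ρ (k-1) else e
  have hσ : ∀ i j, i < j → j ≤ n + 2 → σ i ≠ σ j ∧ (G.Adj (σ i) (σ j) → j = i + 1) := by
    intro i j hij hj
    simp only [σ]
    rw [if_neg (show j ≠ 0 by omega)]
    by_cases hi : i = 0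
    · rw [if_pos hi]
      split_ifs with hj2
      · obtain ⟨h1, h2⟩ := hT (j-1) (by omega)
        exact ⟨h1, fun h => by have := h2 h; omega⟩
      · exact ⟨hne, fun h => (hna h).elim⟩
    · rw [if_neg hi, if_pos (show i ≤ n + 1 by omega)]
      split_ifs with hj2
      · exact ⟨hinj _ _ (by omega) (by omega), fun h => by
          have := hch _ _ (by omega) (by omega) h; omega⟩
      · obtain ⟨h1, h2⟩ := hE (i-1) (by omega)
        exact ⟨h1, fun h => by have := h2 h; omega⟩
  refine ⟨n+1, σ, by omega, by simp [σ], by simp [σ], ?_, by simpa [σ] using h0,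
    by simpa [σ] using hn, ?_, ?_⟩
  · intro i j hi hj hij
    rcases Nat.lt_or_gt_of_ne hij with h | h
    · exact (hσ i j h (by omega)).1
    · exact (hσ j i h (by omega)).1.symm
  · intro i hi hin
    simp only [σ]
    rw [if_neg (by omega), if_pos (by omega), if_neg (by omega), if_pos (by omega)]
    have := hs (i-1) (by omega)
    rwa [Nat.sub_add_cancel hi] at this
  · intro i j hi hj ha
    rcases Nat.lt_trichotomy i j with h | h | h
    · exact Or.inl ((hσ i j h (by omega)).2 ha)
    · subst h
      exact (G.adj_irrefl _ ha).elim
    · exact Or.inr ((hσ j i h (by omega)).2 ha.symm')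

lemma adj_mem_mb {G : ChainGraph V} {T e : V} (h : G.Adj T e) : e ∈ G.mb T := by
  rcases h with h | h | h
  · exact Or.inl (Or.inr h)
  · exact Or.inl (Or.inl (Or.inl h))
  · exact Or.inl (Or.inl (Or.inr (G.undir_symm _ _ h)))

/-- The section starting at a position. -/
lemma exists_section_end {G : ChainGraph V} (ω : Route G) (a : ℕ) (ha : a ≤ ω.len)
    (hb : 0 < a → ¬ G.undir (ω.vtx (a-1)) (ω.vtx a)) : ∃ b, ω.IsSection a b := by
  classical
  have hex : ∃ b, a ≤ b ∧ (b < ω.len → ¬ G.undir (ω.vtx b) (ω.vtx (b+1))) :=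
    ⟨ω.len, ha, fun h => (lt_irrefl _ h).elim⟩
  obtain ⟨h1, h2⟩ := Nat.find_spec hex
  have hmin := fun m => @Nat.find_min _ _ hex m
  have hle : Nat.find hex ≤ ω.len := Nat.find_min' hex ⟨ha, fun h => (lt_irrefl _ h).elim⟩
  refine ⟨Nat.find hex, h1, hle, ?_, hb, h2⟩
  intro k hk hkb
  by_contra hc
  exact hmin k hkb ⟨hk, fun _ => hc⟩

lemma not_active_from {G : ChainGraph V} (ω : Route G) (T : V)
    (hlast : ω.vtx ω.len ≠ T) (hlast' : ω.vtx ω.len ∉ G.mb T) (hact : ω.Active (G.mb T)) :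
    ∀ d i, i + d = ω.len → ω.vtx i = T → (0 < i → G.dir (ω.vtx i) (ω.vtx (i-1))) → False := by
  intro d
  induction d using Nat.strong_induction_on with
  | _ d ih =>
  intro i hid hiT hdir
  have hil : i < ω.len := by
    rcases Nat.lt_or_ge i ω.len with h | h
    · exact h
    · have : i = ω.len := by omega
      exact (hlast (this ▸ hiT)).elim
  -- a position entered through a tail is never in the blanket
  have hnon : ∀ p, p ≤ ω.len → (0 < p → G.dir (ω.vtx p) (ω.vtx (p-1))) →
      ∀ b, ω.IsSection p b → ∀ k, p ≤ k → k ≤ b → ω.vtx k ∉ G.mb T := by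
    intro p hp hd b hsec
    refine hact.2 p b hsec ?_
    rintro ⟨_, h0, _, h1, _⟩
    exact G.dir_asymm _ _ h1 (hd h0)
  have hent : ∀ p, (0 < p → G.dir (ω.vtx p) (ω.vtx (p-1))) →
      (0 < p → ¬ G.undir (ω.vtx (p-1)) (ω.vtx p)) := fun p hd h0 hu =>
    G.dir_not_undir _ _ (hd h0) (G.undir_symm _ _ hu)
  have hadj := ω.link i hil
  have hmem : ω.vtx (i+1) ∈ G.mb T := adj_mem_mb (hiT ▸ hadj)
  rcases hadj with hd | hd | hu
  · -- child
    obtain ⟨b, hb⟩ := exists_section_end ω (i+1) hil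
      (fun _ h => G.dir_not_undir _ _ hd h)
    have hcol : ω.IsColliderSection (i+1) b := by
      by_contra hc
      exact hact.2 _ _ hb hc (i+1) le_rfl hb.1 hmem
    obtain ⟨_, _, hbl, _, hde⟩ := hcol
    have hdb : 0 < b + 1 → G.dir (ω.vtx (b+1)) (ω.vtx (b+1-1)) := fun _ => hde
    by_cases hT : ω.vtx (b+1) = T
    · exact ih (ω.len - (b+1)) (by have := hb.1; omega) (b+1) (by omega) hT hdb
    · have hme : ω.vtx (b+1) ∈ G.mb T := by
        by_cases ha : G.Adj T (ω.vtx (b+1))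
        · exact adj_mem_mb ha
        · refine Or.inr (G.csp_of_section T _ (Ne.symm hT) ha
            ⟨b - (i+1), fun k => ω.vtx (i+1+k), by simpa [hiT] using hd, ?_, ?_⟩)
          · intro k hk
            exact hb.2.2.1 (i+1+k) (by omega) (by omega)
          · dsimp only
            rwa [Nat.add_sub_cancel' hb.1]
      obtain ⟨c, hc⟩ := exists_section_end ω (b+1) hbl (hent _ hdb)
      exact hnon (b+1) hbl hdb c hc (b+1) le_rfl hc.1 hme
  · -- parent
    have hd' : 0 < i + 1 → G.dir (ω.vtx (i+1)) (ω.vtx (i+1-1)) := fun _ => hd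
    obtain ⟨c, hc⟩ := exists_section_end ω (i+1) hil (hent _ hd')
    exact hnon (i+1) hil hd' c hc (i+1) le_rfl hc.1 hmem
  · -- neighbour
    obtain ⟨c, hc⟩ := exists_section_end ω i hil.le (hent _ hdir)
    refine hnon i hil.le hdir c hc (i+1) (by omega) ?_ hmem
    by_contra hlt
    have : c = i := by have := hc.1; omega
    subst this
    exact hc.2.2.2.2 hil hu

/-- The reversed route. -/
def Route.rev {G : ChainGraph V} (ω : Route G) : Route G where
  len := ω.len
  vtx i := ω.vtx (ω.len - i)
  link i hi := by
    have := ω.link (ω.len - (i+1)) (by omega)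
    rw [show ω.len - (i+1) + 1 = ω.len - i by omega] at this
    exact this.symm'

lemma Route.rev_section {G : ChainGraph V} (ω : Route G) {a b : ℕ} (h : ω.rev.IsSection a b) :
    ω.IsSection (ω.len - b) (ω.len - a) := by
  obtain ⟨h1, h2, h3, h4, h5⟩ := h
  simp only [Route.rev] at h2 h3 h4 h5
  refine ⟨by omega, by omega, ?_, ?_, ?_⟩
  · intro k hk hka
    have := h3 (ω.len - (k+1)) (by omega) (by omega)
    rw [show ω.len - (ω.len - (k+1)) = k + 1 by omega,
      show ω.len - (ω.len - (k+1) + 1) = k by omega] at this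
    exact G.undir_symm _ _ this
  · intro h hu
    apply h5 (by omega)
    rw [show ω.len - (b+1) = ω.len - b - 1 by omega]
    exact G.undir_symm _ _ hu
  · intro h hu
    apply h4 (by omega)
    rw [show ω.len - (a-1) = ω.len - a + 1 by omega]
    exact G.undir_symm _ _ hu

lemma Route.rev_collider {G : ChainGraph V} (ω : Route G) {a b : ℕ}
    (h : ω.rev.IsColliderSection a b) : ω.IsColliderSection (ω.len - b) (ω.len - a) := by
  obtain ⟨h1, h2, h3, h4, h5⟩ := h
  have hab := h1.1
  refine ⟨ω.rev_section h1, ?_⟩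
  simp only [Route.rev] at h3 h4 h5
  refine ⟨by omega, by omega, ?_, ?_⟩
  · rw [show ω.len - b - 1 = ω.len - (b+1) by omega]
    exact h5
  · rw [show ω.len - a + 1 = ω.len - (a-1) by omega]
    exact h4

lemma Route.collider_rev {G : ChainGraph V} (ω : Route G) {a b : ℕ} (hab : a ≤ b)
    (hb : b ≤ ω.len) (hs : ω.rev.IsSection a b)
    (h : ω.IsColliderSection (ω.len - b) (ω.len - a)) : ω.rev.IsColliderSection a b := by
  obtain ⟨h1, h2, h3, h4, h5⟩ := h
  refine ⟨hs, by omega, show b < ω.len by omega, ?_, ?_⟩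
  · simp only [Route.rev]
    rw [show ω.len - (a-1) = ω.len - a + 1 by omega]
    exact h5
  · simp only [Route.rev]
    rw [show ω.len - (b+1) = ω.len - b - 1 by omega]
    exact h4

lemma Route.rev_active {G : ChainGraph V} (ω : Route G) {Z : Set V} (h : ω.Active Z) :
    ω.rev.Active Z := by
  constructor
  · intro a b hc
    obtain ⟨k, h1, h2, h3⟩ := h.1 _ _ (ω.rev_collider hc)
    have hb : b ≤ ω.len := hc.1.2.1
    have hab := hc.1.1
    refine ⟨ω.len - k, by omega, by omega, ?_⟩
    simp only [Route.rev]
    rwa [show ω.len - (ω.len - k) = k by omega]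
  · intro a b hs hc k hak hkb
    have hb : b ≤ ω.len := hs.2.1
    exact h.2 _ _ (ω.rev_section hs) (fun hc' => hc (ω.collider_rev hs.1 hb hs hc'))
      (ω.len - k) (by omega) (by omega)

end ChainGraph

/-- In an LWF chain graph `G`, the target `T` is c-separated
from `V ∖ ({T} ∪ Mb(T))` given `Mb(T)`; that is, every route in `G` between `T`
and any vertex `A ∈ V ∖ ({T} ∪ Mb(T))` is intercepted by `Mb(T)`. -/
theorem markovBlanket_cSep {V : Type*} [Fintype V] (G : ChainGraph V) (T : V) :
    G.CSep {T} (Set.univ \ ({T} ∪ G.mb T)) (G.mb T) := by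
  intro ω h hact
  have key : ∀ ω : ChainGraph.Route G, ω.vtx 0 ∈ ({T} : Set V) →
      ω.vtx ω.len ∈ Set.univ \ ({T} ∪ G.mb T) → ω.Active (G.mb T) → False := by
    intro ω h0 hl ha
    exact ChainGraph.not_active_from ω T (fun h => hl.2 (Or.inl h)) (fun h => hl.2 (Or.inr h)) ha
      ω.len 0 (by omega) h0 (fun h => (lt_irrefl _ h).elim)
  rcases h with ⟨h0, hl⟩ | ⟨h0, hl⟩
  · exact key ω h0 hl hact
  · refine key ω.rev ?_ ?_ (ω.rev_active hact)
    · simpa [ChainGraph.Route.rev] using hl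
    · simpa [ChainGraph.Route.rev] using h0

end LWF
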